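/- (Upper half of the error bound) Assume that for all x ∈ 𝒜 and i ∈ {1,…,n}, d_{xi} > 0 implies φ_{ix} > 0. Let ε = max_{x∈𝒜} max_{ i,j : φ_{ix}>0, φ_{jx}>0 } |J*(i) − J*(j)|, and let J̃(i) = Σ_{x∈𝒜} φ_{ix} r*_x. Then J̃(i) ≤ J*(i) + ε/(1−α) for every state i = 1,…,n. -/

import Mathlib

/-!
Let `M = max_i (J̃ i - J* i)`. The Bellman operator `T` is monotone and shifts constants by the
factor `α`, so `T J̃ ≤ J* + α M`. For a state `i` with `φ i x > 0`, every state `k` charged by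
`d x ·` satisfies `J* k ≤ J* i + ε`, hence `r* x ≤ J* i + ε + α M`; averaging over `x` with the
weights `φ i ·` gives `J̃ i ≤ J* i + ε + α M`. At the maximizing state this reads `M ≤ ε + α M`.
-/

theorem sum_mul_le_of_forall_pos_le {ι : Type*} [Fintype ι] {w f : ι → ℝ} {c : ℝ}
    (hw : ∀ i, 0 ≤ w i) (hw1 : ∑ i, w i = 1) (hf : ∀ i, 0 < w i → f i ≤ c) :
    ∑ i, w i * f i ≤ c := by
  calc ∑ i, w i * f i ≤ ∑ i, w i * c := by
        refine Finset.sum_le_sum fun i _ => ?_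
        rcases (hw i).eq_or_lt with hzero | hpos
        · simp [← hzero]
        · exact mul_le_mul_of_nonneg_left (hf i hpos) hpos.le
    _ = c := by rw [← Finset.sum_mul, hw1, one_mul]

theorem le_div_one_sub_of_bound_improves {ι : Type*} [Finite ι] {f : ι → ℝ} {α ε : ℝ}
    (hα : α < 1) (himprove : ∀ M, (∀ i, f i ≤ M) → ∀ i, f i ≤ ε + α * M) (i : ι) :
    f i ≤ ε / (1 - α) := by
  have : Nonempty ι := ⟨i⟩
  obtain ⟨m, hm⟩ := Finite.exists_max f
  have hself : f m ≤ ε + α * f m := himprove (f m) hm m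
  calc f i ≤ f m := hm i
    _ ≤ ε / (1 - α) := by
      rw [le_div_iff₀ (sub_pos.mpr hα)]
      linarith

section DiscountedOperator

variable {S : Type*}

/-- Blackwell's conditions for an operator on cost vectors, monotonicity and discounting of
constants by `α`, merged into a single implication. -/
def BlackwellCondition (α : ℝ) (T : (S → ℝ) → S → ℝ) : Prop :=
  ∀ ⦃J J' : S → ℝ⦄ ⦃c : ℝ⦄, (∀ j, J j ≤ J' j + c) → ∀ i, T J i ≤ T J' i + α * c

variable [Fintype S] {C : Type*}

/-- The dynamic programming operator `T` of the discounted problem, whose fixed point is `J*`. -/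
def bellmanOperator (U : S → Finset C) (hU : ∀ i, (U i).Nonempty) (α : ℝ) (p g : S → C → S → ℝ)
    (J : S → ℝ) (i : S) : ℝ :=
  (U i).inf' (hU i) fun u => ∑ j, p i u j * (g i u j + α * J j)

theorem sum_discounted_cost_le_add {α c : ℝ} (hα : 0 ≤ α) {q g J J' : S → ℝ}
    (hq : ∀ j, 0 ≤ q j) (hq1 : ∑ j, q j = 1) (hJ : ∀ j, J j ≤ J' j + c) :
    ∑ j, q j * (g j + α * J j) ≤ ∑ j, q j * (g j + α * J' j) + α * c := by
  calc ∑ j, q j * (g j + α * J j)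
      ≤ ∑ j, q j * (g j + α * (J' j + c)) := by
        gcongr with j
        exacts [hq j, hJ j]
    _ = ∑ j, q j * (g j + α * J' j) + (∑ j, q j) * (α * c) := by
        rw [Finset.sum_mul, ← Finset.sum_add_distrib]
        exact Finset.sum_congr rfl fun j _ => by ring
    _ = ∑ j, q j * (g j + α * J' j) + α * c := by rw [hq1, one_mul]

theorem blackwellCondition_bellmanOperator {U : S → Finset C} (hU : ∀ i, (U i).Nonempty) {α : ℝ}
    (hα : 0 ≤ α) {p : S → C → S → ℝ} (g : S → C → S → ℝ)
    (hp : ∀ i, ∀ u ∈ U i, ∀ j, 0 ≤ p i u j) (hp1 : ∀ i, ∀ u ∈ U i, ∑ j, p i u j = 1) :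
    BlackwellCondition α (bellmanOperator U hU α p g) := by
  intro J J' c hJ i
  obtain ⟨u, hu, hmin⟩ := Finset.exists_mem_eq_inf' (hU i)
    fun u => ∑ j, p i u j * (g i u j + α * J' j)
  calc bellmanOperator U hU α p g J i
      ≤ ∑ j, p i u j * (g i u j + α * J j) := Finset.inf'_le _ hu
    _ ≤ ∑ j, p i u j * (g i u j + α * J' j) + α * c :=
        sum_discounted_cost_le_add hα (hp i u hu) (hp1 i u hu) hJ
    _ = bellmanOperator U hU α p g J' i + α * c := by rw [bellmanOperator, hmin]

end DiscountedOperator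

section Aggregation

variable {S A : Type*} [Fintype A]

/-- The cost vector `i ↦ ∑ x, φ i x * r x` on the original states interpolated from the values `r`
at the aggregate states; `J̃` is the interpolation of `r*`. -/
def interpolation (φ : S → A → ℝ) (r : A → ℝ) (i : S) : ℝ :=
  ∑ x, φ i x * r x

variable [Fintype S]

/-- The largest variation of `J` over a footprint `{i | 0 < φ i x}`, the `ε` of the error bound.
Pairs of states outside the footprint of `x` contribute `0`. -/
noncomputable def footprintVariation [Nonempty S] [Nonempty A] (φ : S → A → ℝ) (J : S → ℝ) : ℝ :=
  Finset.univ.sup' Finset.univ_nonempty fun q : A × S × S =>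
    if 0 < φ q.2.1 q.1 ∧ 0 < φ q.2.2 q.1 then |J q.2.1 - J q.2.2| else 0

theorem abs_sub_le_footprintVariation [Nonempty S] [Nonempty A] (φ : S → A → ℝ) (J : S → ℝ)
    (x : A) (i j : S) (hi : 0 < φ i x) (hj : 0 < φ j x) :
    |J i - J j| ≤ footprintVariation φ J := by
  refine le_of_eq_of_le ?_ (Finset.le_sup' _ (Finset.mem_univ (x, i, j)))
  exact (if_pos ⟨hi, hj⟩).symm

variable {d : A → S → ℝ} {φ : S → A → ℝ} {J : S → ℝ} {r : A → ℝ} {ε : ℝ}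

theorem interpolation_le_add {V : S → ℝ} {c : ℝ}
    (hd : ∀ x i, 0 ≤ d x i) (hd1 : ∀ x, ∑ i, d x i = 1)
    (hφ : ∀ j y, 0 ≤ φ j y) (hφ1 : ∀ j, ∑ y, φ j y = 1)
    (hsupp : ∀ x i, 0 < d x i → 0 < φ i x)
    (hJ : ∀ x i j, 0 < φ i x → 0 < φ j x → |J i - J j| ≤ ε) (hV : ∀ i, V i ≤ J i + c)
    (hr : ∀ x, r x ≤ ∑ i, d x i * V i) (i : S) :
    interpolation φ r i ≤ J i + (ε + c) := by
  refine sum_mul_le_of_forall_pos_le (hφ i) (hφ1 i) fun x hix => (hr x).trans ?_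
  refine sum_mul_le_of_forall_pos_le (hd x) (hd1 x) fun k hk => ?_
  have hvar : J k - J i ≤ ε := (le_abs_self _).trans (hJ x k i (hsupp x k hk) hix)
  linarith [hV k]

theorem aggregation_error_bound_upper_general {α : ℝ} {T : (S → ℝ) → S → ℝ}
    (hT : BlackwellCondition α T) (hα : α < 1)
    (hd : ∀ x i, 0 ≤ d x i) (hd1 : ∀ x, ∑ i, d x i = 1)
    (hφ : ∀ j y, 0 ≤ φ j y) (hφ1 : ∀ j, ∑ y, φ j y = 1)
    (hsupp : ∀ x i, 0 < d x i → 0 < φ i x)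
    (hJ : ∀ x i j, 0 < φ i x → 0 < φ j x → |J i - J j| ≤ ε)
    (hTJ : ∀ i, T J i ≤ J i) (hr : ∀ x, r x ≤ ∑ i, d x i * T (interpolation φ r) i) (i : S) :
    interpolation φ r i ≤ J i + ε / (1 - α) := by
  rw [← sub_le_iff_le_add']
  refine le_div_one_sub_of_bound_improves (f := fun i => interpolation φ r i - J i) hα
    (fun M hM k => ?_) i
  have hT_le : ∀ j, T (interpolation φ r) j ≤ J j + α * M := fun j =>
    (hT (fun l => sub_le_iff_le_add'.mp (hM l)) j).trans (by gcongr; exact hTJ j)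
  exact sub_le_iff_le_add'.mpr (interpolation_le_add hd hd1 hφ hφ1 hsupp hJ hT_le hr k)

end Aggregation

/-- Error bound on aggregation: under the support condition
`d_{xi} > 0 ⟹ φ_{ix} > 0`, the aggregation approximation
`J̃(i) = Σ_x φ_{ix} r*_x` satisfies `J̃(i) ≤ J*(i) + ε/(1−α)`, where
`ε = max_{x} max_{i,j : φ_{ix}>0, φ_{jx}>0} |J*(i) − J*(j)|`. -/
theorem aggregation_error_bound_upper
    (n : ℕ) [NeZero n] (C A : Type) [Fintype A] [Nonempty A]
    (U : Fin n → Finset C) (hU : ∀ i, (U i).Nonempty)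
    (α : ℝ) (hα0 : 0 < α) (hα1 : α < 1)
    (p g : Fin n → C → Fin n → ℝ)
    (hp : ∀ i, ∀ u ∈ U i, ∀ j, 0 ≤ p i u j)
    (hp1 : ∀ i, ∀ u ∈ U i, ∑ j, p i u j = 1)
    (d : A → Fin n → ℝ) (hd : ∀ x i, 0 ≤ d x i) (hd1 : ∀ x, ∑ i, d x i = 1)
    (φ : Fin n → A → ℝ) (hφ : ∀ j y, 0 ≤ φ j y) (hφ1 : ∀ j, ∑ y, φ j y = 1)
    -- `J*` is the optimal cost vector of the original problem
    (Jstar : Fin n → ℝ)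
    (hJstar : ∀ i, Jstar i = (U i).inf' (hU i)
      (fun u => ∑ j, p i u j * (g i u j + α * Jstar j)))
    -- `r*` is the (unique) fixed point of the aggregation operator `H`
    (rstar : A → ℝ)
    (hfix : ∀ x, rstar x = ∑ i, d x i * (U i).inf' (hU i)
      (fun u => ∑ j, p i u j * (g i u j + α * ∑ y, φ j y * rstar y)))
    -- the support condition
    (hcond : ∀ x i, 0 < d x i → 0 < φ i x)
    -- `ε = max_{x∈𝒜} max_{i,j : φ_{ix}>0, φ_{jx}>0} |J*(i) − J*(j)|`
    (ε : ℝ)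
    (hε : ε = Finset.univ.sup' Finset.univ_nonempty
      (fun q : A × Fin n × Fin n =>
        if 0 < φ q.2.1 q.1 ∧ 0 < φ q.2.2 q.1 then |Jstar q.2.1 - Jstar q.2.2| else 0))
    -- the aggregation approximation `J̃`
    (Jtilde : Fin n → ℝ)
    (hJtilde : ∀ i, Jtilde i = ∑ x, φ i x * rstar x) :
    ∀ i, Jtilde i ≤ Jstar i + ε / (1 - α) := by
  intro i
  rw [hJtilde i, hε]
  exact aggregation_error_bound_upper_general
    (blackwellCondition_bellmanOperator hU hα0.le g hp hp1) hα1 hd hd1 hφ hφ1 hcond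
    (abs_sub_le_footprintVariation φ Jstar) (fun i => (hJstar i).ge) (fun x => (hfix x).le) i
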